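/- arXiv:2507.13098 — 4 statements merged into one kernel-verified Lean document; each statement's English description precedes it below -/
import Mathlib

section
/- Let (u, P, N) be smooth fields on [0,L] and suppose that the first variation of Ψ vanishes for every smooth variation (δu, δP, δN) compactly supported in the open interval (0,L); that is, (d/ds)|_{s=0} Ψ(u + s δu, P + s δP, N + s δN) = 0 for all such variations. Then (u, P, N) satisfies the non-holonomic Euler–Lagrange equations (EL1), (EL2), (EL3), (EL4) at every point of (0,L). -/
open Filter Set intervalIntegral

/-- The Greek (transversal) indices: the Lean indices `1, 2 : Fin 3` play the role of the
paper indices `2, 3`; the Lean index `0` plays the role of the longitudinal index `1`. -/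
def greek : Finset (Fin 3) := {1, 2}

/-- The non-holonomic total energy `Ψ(u, P, N)` of the 1D-in-3D beam model. -/
noncomputable def PsiNonHolo (L a b c d e ℓ : ℝ)
    (f₀ : ℝ → Fin 3 → ℝ) (f₁ : ℝ → Fin 3 → Fin 3 → ℝ)
    (f₂ : ℝ → Fin 3 → Fin 3 → Fin 3 → ℝ)
    (u : ℝ → Fin 3 → ℝ) (P : ℝ → Fin 3 → Fin 3 → ℝ)
    (N : ℝ → Fin 3 → Fin 3 → Fin 3 → ℝ) : ℝ :=
  ∫ t in (0:ℝ)..L,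
    (a / 8 * ∑ i : Fin 3, ∑ j : Fin 3, (P t i j + P t j i) ^ 2
      + a * ℓ ^ 4 / 96 * ∑ i : Fin 3, ∑ j : Fin 3, ∑ α ∈ greek, (N t i j α + N t j i α) ^ 2
      + b / 2 * ∑ i : Fin 3, ∑ j : Fin 3, ∑ k : Fin 3, (N t i j k) ^ 2
      + c / 2 * ∑ i : Fin 3, ∑ j : Fin 3, ∑ k : Fin 3, (deriv (fun s => N s i j k) t) ^ 2
      + d / 2 * ∑ i : Fin 3, (deriv (fun s => u s i) t - P t i 0) ^ 2
      + d * ℓ ^ 4 / 24 * ∑ i : Fin 3, ∑ α ∈ greek,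
          (deriv (fun s => P s i α) t - N t i 0 α) ^ 2
      + e / 2 * ∑ i : Fin 3, ∑ j : Fin 3, (deriv (fun s => P s i j) t - N t i j 0) ^ 2
      + e * ℓ ^ 4 / 24 * ∑ i : Fin 3, ∑ j : Fin 3, ∑ α ∈ greek,
          (deriv (fun s => N s i j α) t) ^ 2
      - ∑ i : Fin 3, f₀ t i * u t i
      - ∑ i : Fin 3, ∑ j : Fin 3, f₁ t i j * P t i j
      - ∑ i : Fin 3, ∑ j : Fin 3, ∑ k : Fin 3, f₂ t i j k * N t i j k)

/-- Quadratic density with first variation `G₀ φ + G₁ φ'`, where `G₁' = H`. -/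
def QD (F : (ℝ → ℝ) → ℝ → ℝ → ℝ) (G H : ℝ → ℝ) : Prop :=
  Continuous G ∧ Continuous H ∧ ∃ K : ℝ → ℝ, (∀ t, HasDerivAt K (H t) t) ∧
    ∀ φ : ℝ → ℝ, ContDiff ℝ (⊤ : ℕ∞) φ → ∃ A C : ℝ → ℝ, Continuous A ∧ Continuous C ∧
      ∀ s t, F φ s t = A t + s * (G t * φ t + K t * deriv φ t) + s ^ 2 * C t

theorem QD.add {F F' G H G' H'} (h : QD F G H) (h' : QD F' G' H') :
    QD (fun φ s t => F φ s t + F' φ s t) (fun t => G t + G' t) (fun t => H t + H' t) := by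
  obtain ⟨hG, hH, K, hK, h⟩ := h
  obtain ⟨hG', hH', K', hK', h'⟩ := h'
  refine ⟨hG.add hG', hH.add hH', fun t => K t + K' t, fun t => (hK t).add (hK' t), fun φ hφ => ?_⟩
  obtain ⟨A, C, hA, hC, e⟩ := h φ hφ
  obtain ⟨A', C', hA', hC', e'⟩ := h' φ hφ
  refine ⟨fun t => A t + A' t, fun t => C t + C' t, hA.add hA', hC.add hC', fun s t => ?_⟩
  simp only [e, e']; ring

theorem QD.const_mul {F G H} (k : ℝ) (h : QD F G H) :
    QD (fun φ s t => k * F φ s t) (fun t => k * G t) (fun t => k * H t) := by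
  obtain ⟨hG, hH, K, hK, h⟩ := h
  refine ⟨by fun_prop, by fun_prop, fun t => k * K t, fun t => (hK t).const_mul k, fun φ hφ => ?_⟩
  obtain ⟨A, C, hA, hC, e⟩ := h φ hφ
  refine ⟨fun t => k * A t, fun t => k * C t, by fun_prop, by fun_prop, fun s t => ?_⟩
  simp only [e]; ring

theorem QD.sub {F F' G H G' H'} (h : QD F G H) (h' : QD F' G' H') :
    QD (fun φ s t => F φ s t - F' φ s t) (fun t => G t - G' t) (fun t => H t - H' t) := by
  have := h.add (h'.const_mul (-1))
  simpa [sub_eq_add_neg] using this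

theorem QD.sum {ι : Type} [DecidableEq ι] (S : Finset ι) {F : ι → (ℝ → ℝ) → ℝ → ℝ → ℝ}
    {G H : ι → ℝ → ℝ} (h : ∀ i, QD (F i) (G i) (H i)) :
    QD (fun φ s t => ∑ i ∈ S, F i φ s t) (fun t => ∑ i ∈ S, G i t) (fun t => ∑ i ∈ S, H i t) := by
  induction S using Finset.induction_on with
  | empty =>
    simp only [Finset.sum_empty]
    exact ⟨continuous_const, continuous_const, fun _ => 0, fun t => hasDerivAt_const t 0,
      fun φ _ => ⟨fun _ => 0, fun _ => 0, continuous_const, continuous_const, by simp⟩⟩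
  | insert i S hi ih =>
    simp only [Finset.sum_insert hi]
    exact (h i).add ih

theorem QD.sq {F : (ℝ → ℝ) → ℝ → ℝ → ℝ} (x x' : ℝ → ℝ) (p q : ℝ)
    (hx : ∀ t, HasDerivAt x (x' t) t) (hx' : Continuous x')
    (e : ∀ φ : ℝ → ℝ, ContDiff ℝ (⊤ : ℕ∞) φ → ∀ s t,
      F φ s t = x t + s * (p * φ t + q * deriv φ t)) :
    QD (fun φ s t => (F φ s t) ^ 2) (fun t => 2 * (x t * p)) (fun t => 2 * (x' t * q)) := by
  have hxc : Continuous x := continuous_iff_continuousAt.2 fun t => (hx t).continuousAt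
  refine ⟨by fun_prop, by fun_prop, fun t => 2 * (x t * q),
    fun t => ((hx t).mul_const q).const_mul 2, fun φ hφ => ?_⟩
  have h1 : Continuous φ := hφ.continuous
  have h2 : Continuous (deriv φ) := hφ.continuous_deriv (by norm_num)
  refine ⟨fun t => x t ^ 2, fun t => (p * φ t + q * deriv φ t) ^ 2, by fun_prop, by fun_prop,
    fun s t => ?_⟩
  simp only [e φ hφ]; ring

theorem QD.lin (g x : ℝ → ℝ) (p : ℝ) (hg : Continuous g) (hx : Continuous x) :
    QD (fun φ s t => g t * (x t + s * (p * φ t))) (fun t => g t * p) (fun _ => 0) := by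
  refine ⟨by fun_prop, by fun_prop, fun t => 0, fun t => hasDerivAt_const t 0, fun φ hφ => ?_⟩
  refine ⟨fun t => g t * x t, fun _ => 0, by fun_prop, by fun_prop, fun s t => ?_⟩
  ring

open MeasureTheory in
theorem QD.main {F : (ℝ → ℝ) → ℝ → ℝ → ℝ} {G H : ℝ → ℝ} (h : QD F G H) (L : ℝ) (hL : 0 < L)
    (hv : ∀ φ : ℝ → ℝ, ContDiff ℝ (⊤ : ℕ∞) φ → tsupport φ ⊆ Ioo 0 L →
      deriv (fun s => ∫ t in (0:ℝ)..L, F φ s t) 0 = 0) :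
    ∀ t ∈ Ioo 0 L, G t = H t := by
  obtain ⟨hG, hH, K, hK, h⟩ := h
  have hKc : Continuous K := continuous_iff_continuousAt.2 fun t => (hK t).continuousAt
  have key : ∀ φ : ℝ → ℝ, ContDiff ℝ (⊤ : ℕ∞) φ → tsupport φ ⊆ Ioo 0 L →
      ∫ t, φ t • (G t - H t) = 0 := by
    intro φ hφ hs
    have h1 : Continuous φ := hφ.continuous
    have h2 : Continuous (deriv φ) := hφ.continuous_deriv (by norm_num)
    obtain ⟨A, C, hA, hC, e⟩ := h φ hφ
    have hB : Continuous (fun t => G t * φ t + K t * deriv φ t) := by fun_prop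
    have hI : (fun s => ∫ t in (0:ℝ)..L, F φ s t) = fun s => (∫ t in (0:ℝ)..L, A t)
        + s * (∫ t in (0:ℝ)..L, (G t * φ t + K t * deriv φ t))
        + s ^ 2 * ∫ t in (0:ℝ)..L, C t := by
      funext s
      simp only [e]
      rw [intervalIntegral.integral_add, intervalIntegral.integral_add,
        intervalIntegral.integral_const_mul, intervalIntegral.integral_const_mul]
      all_goals apply Continuous.intervalIntegrable; fun_prop
    have hd := hv φ hφ hs
    rw [hI] at hd
    have hd' : ∀ α β γ : ℝ, HasDerivAt (fun s : ℝ => α + s * β + s ^ 2 * γ) β 0 := by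
      intro α β γ
      have := (((hasDerivAt_id (0:ℝ)).mul_const β).const_add α).fun_add
        (((hasDerivAt_id (0:ℝ)).pow 2).mul_const γ)
      simpa using this
    rw [(hd' _ _ _).deriv] at hd
    have z0 : φ 0 = 0 := image_eq_zero_of_notMem_tsupport fun hh => by simpa using (hs hh).1
    have zL : φ L = 0 := image_eq_zero_of_notMem_tsupport fun hh => by simpa using (hs hh).2
    have hf : ∫ t in (0:ℝ)..L, (H t * φ t + K t * deriv φ t) = 0 := by
      rw [intervalIntegral.integral_eq_sub_of_hasDerivAt (f := fun t => K t * φ t)]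
      · simp [z0, zL]
      · intro t _
        exact (hK t).mul ((hφ.differentiable (by norm_num)) t).hasDerivAt
      · apply Continuous.intervalIntegrable; fun_prop
    have : ∫ t in (0:ℝ)..L, φ t • (G t - H t) = 0 := by
      have := intervalIntegral.integral_sub (μ := volume) (hB.intervalIntegrable 0 L)
        ((by fun_prop : Continuous fun t => (H t * φ t + K t * deriv φ t)).intervalIntegrable 0 L)
      rw [hd, hf, sub_zero] at this
      rw [← this]
      congr 1; funext t; simp only [smul_eq_mul]; ring
    rw [← this, intervalIntegral.integral_eq_integral_of_support_subset]
    intro t ht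
    have : t ∈ Ioo 0 L := hs (subset_tsupport _ fun h0 => ht (by simp [h0]))
    exact ⟨this.1, this.2.le⟩
  have hae := (isOpen_Ioo (a := (0:ℝ)) (b := L)).ae_eq_zero_of_integral_contDiff_smul_eq_zero
    (μ := volume) (f := fun t => G t - H t)
    ((hG.sub hH).locallyIntegrable.locallyIntegrableOn _)
    (fun g hg _ hs => key g hg hs)
  have := Measure.eqOn_open_of_ae_eq (μ := volume) (f := fun t => G t - H t) (g := fun _ => 0)
    ((ae_restrict_iff' measurableSet_Ioo).2 hae) isOpen_Ioo (hG.sub hH).continuousOn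
    continuousOn_const
  intro t ht
  have := this ht
  simp only at this
  linarith

theorem deriv_var {x : ℝ → ℝ} (hx : ContDiff ℝ (⊤ : ℕ∞) x) {φ : ℝ → ℝ}
    (hφ : ContDiff ℝ (⊤ : ℕ∞) φ) (s p t : ℝ) :
    deriv (fun r => x r + s * (p * φ r)) t = deriv x t + s * (p * deriv φ t) :=
  (((hx.differentiable (by norm_num)) t).hasDerivAt.add
    ((((hφ.differentiable (by norm_num)) t).hasDerivAt.const_mul p).const_mul s)).deriv

theorem hd0 {x : ℝ → ℝ} (hx : ContDiff ℝ (⊤ : ℕ∞) x) (t : ℝ) : HasDerivAt x (deriv x t) t :=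
  ((hx.differentiable (by norm_num)) t).hasDerivAt

theorem cd1 {x : ℝ → ℝ} (hx : ContDiff ℝ (⊤ : ℕ∞) x) : ContDiff ℝ (⊤ : ℕ∞) (deriv x) :=
  ((contDiff_infty_iff_deriv).1 hx).2

theorem it2 {x : ℝ → ℝ} : iteratedDeriv 2 x = deriv (deriv x) := by
  rw [iteratedDeriv_succ, iteratedDeriv_one]

theorem weak
    (L a b c d e ℓ : ℝ) (hL : 0 < L)
    (f₀ : ℝ → Fin 3 → ℝ) (f₁ : ℝ → Fin 3 → Fin 3 → ℝ)
    (f₂ : ℝ → Fin 3 → Fin 3 → Fin 3 → ℝ)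
    (hf₀ : ∀ i, Continuous (fun t => f₀ t i))
    (hf₁ : ∀ i j, Continuous (fun t => f₁ t i j))
    (hf₂ : ∀ i j k, Continuous (fun t => f₂ t i j k))
    (u : ℝ → Fin 3 → ℝ) (P : ℝ → Fin 3 → Fin 3 → ℝ) (N : ℝ → Fin 3 → Fin 3 → Fin 3 → ℝ)
    (hu : ∀ i, ContDiff ℝ (⊤ : ℕ∞) (fun t => u t i))
    (hP : ∀ i j, ContDiff ℝ (⊤ : ℕ∞) (fun t => P t i j))
    (hN : ∀ i j k, ContDiff ℝ (⊤ : ℕ∞) (fun t => N t i j k))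
    (hvar : ∀ (δu : ℝ → Fin 3 → ℝ) (δP : ℝ → Fin 3 → Fin 3 → ℝ)
        (δN : ℝ → Fin 3 → Fin 3 → Fin 3 → ℝ),
      (∀ i, ContDiff ℝ (⊤ : ℕ∞) (fun t => δu t i)) →
      (∀ i j, ContDiff ℝ (⊤ : ℕ∞) (fun t => δP t i j)) →
      (∀ i j k, ContDiff ℝ (⊤ : ℕ∞) (fun t => δN t i j k)) →
      (∀ i, tsupport (fun t => δu t i) ⊆ Ioo (0:ℝ) L) →
      (∀ i j, tsupport (fun t => δP t i j) ⊆ Ioo (0:ℝ) L) →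
      (∀ i j k, tsupport (fun t => δN t i j k) ⊆ Ioo (0:ℝ) L) →
      deriv (fun s : ℝ => PsiNonHolo L a b c d e ℓ f₀ f₁ f₂
        (fun t i => u t i + s * δu t i)
        (fun t i j => P t i j + s * δP t i j)
        (fun t i j k => N t i j k + s * δN t i j k)) 0 = 0)
    (v : Fin 3 → ℝ) (p : Fin 3 → Fin 3 → ℝ) (n : Fin 3 → Fin 3 → Fin 3 → ℝ) :
    ∀ t ∈ Ioo (0:ℝ) L,
    (a / 8 * ∑ i : Fin 3, ∑ j : Fin 3, 2 * ((P t i j + P t j i) * (p i j + p j i))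
      + a * ℓ ^ 4 / 96 * ∑ i : Fin 3, ∑ j : Fin 3, ∑ α ∈ greek,
          2 * ((N t i j α + N t j i α) * (n i j α + n j i α))
      + b / 2 * ∑ i : Fin 3, ∑ j : Fin 3, ∑ k : Fin 3, 2 * (N t i j k * n i j k)
      + c / 2 * ∑ i : Fin 3, ∑ j : Fin 3, ∑ k : Fin 3, 2 * (deriv (fun s => N s i j k) t * 0)
      + d / 2 * ∑ i : Fin 3, 2 * ((deriv (fun s => u s i) t - P t i 0) * (- p i 0))
      + d * ℓ ^ 4 / 24 * ∑ i : Fin 3, ∑ α ∈ greek,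
          2 * ((deriv (fun s => P s i α) t - N t i 0 α) * (- n i 0 α))
      + e / 2 * ∑ i : Fin 3, ∑ j : Fin 3,
          2 * ((deriv (fun s => P s i j) t - N t i j 0) * (- n i j 0))
      + e * ℓ ^ 4 / 24 * ∑ i : Fin 3, ∑ j : Fin 3, ∑ α ∈ greek,
          2 * (deriv (fun s => N s i j α) t * 0)
      - ∑ i : Fin 3, f₀ t i * v i
      - ∑ i : Fin 3, ∑ j : Fin 3, f₁ t i j * p i j
      - ∑ i : Fin 3, ∑ j : Fin 3, ∑ k : Fin 3, f₂ t i j k * n i j k) =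
    (a / 8 * ∑ i : Fin 3, ∑ j : Fin 3,
          2 * ((deriv (fun s => P s i j) t + deriv (fun s => P s j i) t) * 0)
      + a * ℓ ^ 4 / 96 * ∑ i : Fin 3, ∑ j : Fin 3, ∑ α ∈ greek,
          2 * ((deriv (fun s => N s i j α) t + deriv (fun s => N s j i α) t) * 0)
      + b / 2 * ∑ i : Fin 3, ∑ j : Fin 3, ∑ k : Fin 3, 2 * (deriv (fun s => N s i j k) t * 0)
      + c / 2 * ∑ i : Fin 3, ∑ j : Fin 3, ∑ k : Fin 3,
          2 * (deriv (deriv (fun s => N s i j k)) t * n i j k)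
      + d / 2 * ∑ i : Fin 3,
          2 * ((deriv (deriv (fun s => u s i)) t - deriv (fun s => P s i 0) t) * v i)
      + d * ℓ ^ 4 / 24 * ∑ i : Fin 3, ∑ α ∈ greek,
          2 * ((deriv (deriv (fun s => P s i α)) t - deriv (fun s => N s i 0 α) t) * p i α)
      + e / 2 * ∑ i : Fin 3, ∑ j : Fin 3,
          2 * ((deriv (deriv (fun s => P s i j)) t - deriv (fun s => N s i j 0) t) * p i j)
      + e * ℓ ^ 4 / 24 * ∑ i : Fin 3, ∑ j : Fin 3, ∑ α ∈ greek,
          2 * (deriv (deriv (fun s => N s i j α)) t * n i j α)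
      - ∑ i : Fin 3, 0
      - ∑ i : Fin 3, ∑ j : Fin 3, 0
      - ∑ i : Fin 3, ∑ j : Fin 3, ∑ k : Fin 3, 0) := by
  have Pc := fun i j => (cd1 (hP i j)).continuous
  have Nc := fun i j k => (cd1 (hN i j k)).continuous
  have uc2 := fun i => (cd1 (cd1 (hu i))).continuous
  have Pc2 := fun i j => (cd1 (cd1 (hP i j))).continuous
  have Nc2 := fun i j k => (cd1 (cd1 (hN i j k))).continuous
  have hs : ∀ φ : ℝ → ℝ, ∀ k : ℝ, tsupport φ ⊆ Ioo (0:ℝ) L →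
      tsupport (fun t => k * φ t) ⊆ Ioo (0:ℝ) L := fun φ k h =>
    (tsupport_mul_subset_right (f := fun _ => k) (g := φ)).trans h
  refine QD.main ?_ L hL (fun φ hφ hsφ => hvar (fun t i => v i * φ t) (fun t i j => p i j * φ t)
    (fun t i j k => n i j k * φ t) (fun i => contDiff_const.mul hφ)
    (fun i j => contDiff_const.mul hφ) (fun i j k => contDiff_const.mul hφ)
    (fun i => hs _ _ hsφ) (fun i j => hs _ _ hsφ) (fun i j k => hs _ _ hsφ))
  refine .sub (.sub (.sub (.add (.add (.add (.add (.add (.add (.add ?_ ?_) ?_) ?_) ?_) ?_) ?_) ?_)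
    ?_) ?_) ?_
  · refine .const_mul _ (.sum _ fun i => .sum _ fun j => .sq _ _ _ _
      (fun t => (hd0 (hP i j) t).add (hd0 (hP j i) t)) (by fun_prop) fun φ hφ s t => ?_)
    dsimp only [Pi.add_apply]; ring
  · refine .const_mul _ (.sum _ fun i => .sum _ fun j => .sum _ fun k => .sq _ _ _ _
      (fun t => (hd0 (hN i j k) t).add (hd0 (hN j i k) t)) (by fun_prop) fun φ hφ s t => ?_)
    dsimp only [Pi.add_apply]; ring
  · refine .const_mul _ (.sum _ fun i => .sum _ fun j => .sum _ fun k => .sq _ _ _ _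
      (fun t => (hd0 (hN i j k) t)) (by fun_prop) fun φ hφ s t => ?_)
    ring
  · refine .const_mul _ (.sum _ fun i => .sum _ fun j => .sum _ fun k => .sq _ _ _ _
      (fun t => (hd0 (cd1 (hN i j k)) t)) (by fun_prop) fun φ hφ s t => ?_)
    rw [deriv_var (hN i j k) hφ]; ring
  · refine .const_mul _ (.sum _ fun i => .sq _ _ _ _
      (fun t => (hd0 (cd1 (hu i)) t).sub (hd0 (hP i 0) t)) (by fun_prop) fun φ hφ s t => ?_)
    rw [deriv_var (hu i) hφ]; dsimp only [Pi.sub_apply]; ring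
  · refine .const_mul _ (.sum _ fun i => .sum _ fun k => .sq _ _ _ _
      (fun t => (hd0 (cd1 (hP i k)) t).sub (hd0 (hN i 0 k) t)) (by fun_prop) fun φ hφ s t => ?_)
    rw [deriv_var (hP i k) hφ]; dsimp only [Pi.sub_apply]; ring
  · refine .const_mul _ (.sum _ fun i => .sum _ fun k => .sq _ _ _ _
      (fun t => (hd0 (cd1 (hP i k)) t).sub (hd0 (hN i k 0) t)) (by fun_prop) fun φ hφ s t => ?_)
    rw [deriv_var (hP i k) hφ]; dsimp only [Pi.sub_apply]; ring
  · refine .const_mul _ (.sum _ fun i => .sum _ fun j => .sum _ fun k => .sq _ _ _ _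
      (fun t => (hd0 (cd1 (hN i j k)) t)) (by fun_prop) fun φ hφ s t => ?_)
    rw [deriv_var (hN i j k) hφ]; ring
  · exact .sum _ fun i => .lin _ _ _ (hf₀ i) (hu i).continuous
  · exact .sum _ fun i => .sum _ fun j => .lin _ _ _ (hf₁ i j) (hP i j).continuous
  · exact .sum _ fun i => .sum _ fun j => .sum _ fun k =>
      .lin _ _ _ (hf₂ i j k) (hN i j k).continuous

set_option maxHeartbeats 4000000 in
/-- If `(u, P, N)` are smooth and the first variation of the non-holonomic
energy `Ψ` vanishes for every smooth variation compactly supported in `(0, L)`, then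
`(u, P, N)` satisfies the non-holonomic Euler–Lagrange equations (EL1)–(EL4) on `(0, L)`. -/
theorem statement5
    (L a b c d e ℓ : ℝ) (hL : 0 < L) (ha : 0 < a) (hb : 0 < b) (hc : 0 < c)
    (hd : 0 < d) (he : 0 < e) (hℓ : 0 < ℓ)
    (f₀ : ℝ → Fin 3 → ℝ) (f₁ : ℝ → Fin 3 → Fin 3 → ℝ)
    (f₂ : ℝ → Fin 3 → Fin 3 → Fin 3 → ℝ)
    (hf₀ : ∀ i, Continuous (fun t => f₀ t i))
    (hf₁ : ∀ i j, Continuous (fun t => f₁ t i j))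
    (hf₂ : ∀ i j k, Continuous (fun t => f₂ t i j k))
    (u : ℝ → Fin 3 → ℝ) (P : ℝ → Fin 3 → Fin 3 → ℝ) (N : ℝ → Fin 3 → Fin 3 → Fin 3 → ℝ)
    (hu : ∀ i, ContDiff ℝ (⊤ : ℕ∞) (fun t => u t i))
    (hP : ∀ i j, ContDiff ℝ (⊤ : ℕ∞) (fun t => P t i j))
    (hN : ∀ i j k, ContDiff ℝ (⊤ : ℕ∞) (fun t => N t i j k))
    (hvar : ∀ (δu : ℝ → Fin 3 → ℝ) (δP : ℝ → Fin 3 → Fin 3 → ℝ)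
        (δN : ℝ → Fin 3 → Fin 3 → Fin 3 → ℝ),
      (∀ i, ContDiff ℝ (⊤ : ℕ∞) (fun t => δu t i)) →
      (∀ i j, ContDiff ℝ (⊤ : ℕ∞) (fun t => δP t i j)) →
      (∀ i j k, ContDiff ℝ (⊤ : ℕ∞) (fun t => δN t i j k)) →
      (∀ i, tsupport (fun t => δu t i) ⊆ Ioo (0:ℝ) L) →
      (∀ i j, tsupport (fun t => δP t i j) ⊆ Ioo (0:ℝ) L) →
      (∀ i j k, tsupport (fun t => δN t i j k) ⊆ Ioo (0:ℝ) L) →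
      deriv (fun s : ℝ => PsiNonHolo L a b c d e ℓ f₀ f₁ f₂
        (fun t i => u t i + s * δu t i)
        (fun t i j => P t i j + s * δP t i j)
        (fun t i j k => N t i j k + s * δN t i j k)) 0 = 0) :
    ∀ t ∈ Ioo (0:ℝ) L, ∀ i j : Fin 3,
      -- (EL1)
      (f₀ t i = -d * (iteratedDeriv 2 (fun s => u s i) t - deriv (fun s => P s i 0) t)) ∧
      -- (EL2)
      (f₁ t i j = a / 2 * (P t i j + P t j i)
        - d * (deriv (fun s => u s i) t - P t i 0) * (if j = 0 then 1 else 0)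
        - d * ℓ ^ 4 / 12
            * (iteratedDeriv 2 (fun s => P s i j) t - deriv (fun s => N s i 0 j) t)
            * (if j = 0 then 0 else 1)
        - e * (iteratedDeriv 2 (fun s => P s i j) t - deriv (fun s => N s i j 0) t)) ∧
      -- (EL3)
      (f₂ t i j 0 = b * N t i j 0 - c * iteratedDeriv 2 (fun s => N s i j 0) t
        - e * (deriv (fun s => P s i j) t - N t i j 0)) ∧
      -- (EL4)
      (∀ α : Fin 3, α ≠ 0 →
        f₂ t i j α = b * N t i j α - c * iteratedDeriv 2 (fun s => N s i j α) t
          + ℓ ^ 4 / 12 * (a / 2 * (N t i j α + N t j i α)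
              - d * (deriv (fun s => P s i α) t - N t i 0 α) * (if j = 0 then 1 else 0)
              - e * iteratedDeriv 2 (fun s => N s i j α) t)) := by

  have W := weak L a b c d e ℓ hL f₀ f₁ f₂ hf₀ hf₁ hf₂ u P N hu hP hN hvar
  have hg : ∀ f : Fin 3 → ℝ, ∑ α ∈ greek, f α = f 1 + f 2 := fun f => by
    simp [greek]
  intro t ht i j
  simp only [it2]
  have W3 : ∀ k : Fin 3, _ := fun k =>
    W 0 0 (fun i' j' k' => if i' = i then if j' = j then if k' = k then 1 else 0 else 0 else 0) t ht
  have W2 := W 0 (fun i' j' => if i' = i then if j' = j then 1 else 0 else 0) 0 t ht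
  have W1 := W (fun i' => if i' = i then 1 else 0) 0 0 t ht
  refine ⟨?_, ?_, ?_, ?_⟩
  · clear W3 W2 W
    simp only [hg, Fin.sum_univ_three, Pi.zero_apply] at W1
    fin_cases i <;> simp at W1 ⊢ <;> linarith
  · clear W3 W1 W
    simp only [hg, Fin.sum_univ_three, Pi.zero_apply] at W2
    fin_cases i <;> fin_cases j <;> simp at W2 ⊢ <;> linarith
  · have W3 := W3 0
    clear W2 W1 W
    simp only [hg, Fin.sum_univ_three, Pi.zero_apply] at W3
    fin_cases i <;> fin_cases j <;> simp at W3 ⊢ <;> linarith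
  · intro k hk
    have W3 := W3 k
    clear W2 W1 W
    simp only [hg, Fin.sum_univ_three, Pi.zero_apply] at W3
    fin_cases k
    · simp at hk
    all_goals fin_cases i <;> fin_cases j <;> simp at W3 ⊢ <;> linarith
end

section
/- Let (u, P) be smooth fields on [0,L] and suppose that the first variation of Ψ vanishes for every smooth variation (δu, δP) compactly supported in the open interval (0,L); that is, (d/ds)|_{s=0} Ψ(u + s δu, P + s δP) = 0 for all such variations. Then (u, P) satisfies the semi-holonomic Euler–Lagrange equations (S1) and (S2) at every point of (0,L). -/
open Filter Set intervalIntegral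

/-- The semi-holonomic total energy `Ψ(u, P)` of the 1D-in-3D beam model; `nb i α` stands
for the constant `n̄^i_{1α}`. -/
noncomputable def PsiSemiHolo (L a b c d ℓ : ℝ)
    (nb : Fin 3 → Fin 3 → ℝ)
    (f₀ : ℝ → Fin 3 → ℝ) (f₁ : ℝ → Fin 3 → Fin 3 → ℝ)
    (u : ℝ → Fin 3 → ℝ) (P : ℝ → Fin 3 → Fin 3 → ℝ) : ℝ :=
  ∫ t in (0:ℝ)..L,
    (a / 8 * ∑ i : Fin 3, ∑ j : Fin 3, (P t i j + P t j i) ^ 2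
      + b / 2 * ∑ i : Fin 3, ∑ j : Fin 3, (deriv (fun s => P s i j) t) ^ 2
      + d * ℓ ^ 4 / 24 * ∑ i : Fin 3, ∑ α ∈ greek, (deriv (fun s => P s i α) t) ^ 2
      + c / 2 * ∑ i : Fin 3, ∑ j : Fin 3, (iteratedDeriv 2 (fun s => P s i j) t) ^ 2
      + d / 2 * ∑ i : Fin 3, (deriv (fun s => u s i) t - P t i 0) ^ 2
      - d * ℓ ^ 4 / 12 * ∑ i : Fin 3, ∑ α ∈ greek, nb i α * deriv (fun s => P s i α) t
      - ∑ i : Fin 3, f₀ t i * u t i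
      - ∑ i : Fin 3, ∑ j : Fin 3, f₁ t i j * P t i j)

theorem aux_quad (L : ℝ) (A B C : ℝ → ℝ) (hA : Continuous A) (hB : Continuous B)
    (hC : Continuous C) :
    deriv (fun s : ℝ => ∫ t in (0:ℝ)..L, (A t + s * B t + s ^ 2 * C t)) 0
      = ∫ t in (0:ℝ)..L, B t := by
  have h : (fun s : ℝ => ∫ t in (0:ℝ)..L, (A t + s * B t + s ^ 2 * C t))
      = fun s : ℝ => (∫ t in (0:ℝ)..L, A t) + s * (∫ t in (0:ℝ)..L, B t)
        + s ^ 2 * (∫ t in (0:ℝ)..L, C t) := by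
    funext s
    rw [intervalIntegral.integral_add, intervalIntegral.integral_add,
      intervalIntegral.integral_const_mul, intervalIntegral.integral_const_mul]
    all_goals exact Continuous.intervalIntegrable (by fun_prop) _ _
  rw [h]
  have h2 := (((hasDerivAt_id (0:ℝ)).mul_const (∫ t in (0:ℝ)..L, B t)).const_add
    (∫ t in (0:ℝ)..L, A t)).add
    (((hasDerivAt_id (0:ℝ)).pow 2).mul_const (∫ t in (0:ℝ)..L, C t))
  have h3 := h2.deriv
  simp only [id] at h3
  refine Eq.trans ?_ (h3.trans ?_)
  · rfl
  · simp

theorem aux_key (L : ℝ) (hL : 0 < L) (F G G1 H H1 H2 : ℝ → ℝ)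
    (hF : Continuous F) (hG1 : Continuous G1) (hH2 : Continuous H2)
    (hG : ∀ t, HasDerivAt G (G1 t) t) (hH : ∀ t, HasDerivAt H (H1 t) t)
    (hH1 : ∀ t, HasDerivAt H1 (H2 t) t)
    (hv : ∀ φ : ℝ → ℝ, ContDiff ℝ (⊤ : ℕ∞) φ → tsupport φ ⊆ Ioo (0:ℝ) L →
      ∫ t in (0:ℝ)..L, (F t * φ t + G t * deriv φ t + H t * deriv (deriv φ) t) = 0) :
    ∀ t ∈ Ioo (0:ℝ) L, F t - G1 t + H2 t = 0 := by
  have cG : Continuous G := continuous_iff_continuousAt.2 fun t => (hG t).continuousAt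
  have cH : Continuous H := continuous_iff_continuousAt.2 fun t => (hH t).continuousAt
  have cH1 : Continuous H1 := continuous_iff_continuousAt.2 fun t => (hH1 t).continuousAt
  have hcont : Continuous (fun t => F t - G1 t + H2 t) := by fun_prop
  have hae : ∀ᵐ x ∂MeasureTheory.volume, x ∈ Ioo (0:ℝ) L → F x - G1 x + H2 x = 0 := by
    refine IsOpen.ae_eq_zero_of_integral_contDiff_smul_eq_zero isOpen_Ioo
      (hcont.locallyIntegrable.locallyIntegrableOn _) ?_
    intro φ hφ _ hs
    have hφ1 : ContDiff ℝ (⊤ : ℕ∞) (deriv φ) := hφ.iterate_deriv 1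
    have hφ2 : ContDiff ℝ (⊤ : ℕ∞) (deriv (deriv φ)) := hφ.iterate_deriv 2
    have d1 : ∀ t, HasDerivAt φ (deriv φ t) t := fun t =>
      ((hφ.differentiable (by simp)) t).hasDerivAt
    have d2 : ∀ t, HasDerivAt (deriv φ) (deriv (deriv φ) t) t := fun t =>
      ((hφ1.differentiable (by simp)) t).hasDerivAt
    have c0 := hφ.continuous
    have c1 := hφ1.continuous
    have c2 := hφ2.continuous
    have hz : ∀ t, t ∉ Ioo (0:ℝ) L → φ t = 0 ∧ deriv φ t = 0 := by
      intro t ht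
      refine ⟨image_eq_zero_of_notMem_tsupport fun h => ht (hs h), ?_⟩
      exact image_eq_zero_of_notMem_tsupport fun h =>
        ht (hs (tsupport_deriv_subset h))
    obtain ⟨z0, z0'⟩ := hz 0 (by simp)
    obtain ⟨zL, zL'⟩ := hz L (by simp)
    have e1 : ∫ t in (0:ℝ)..L, (G1 t * φ t + G t * deriv φ t
        + (H1 t * deriv φ t + H t * deriv (deriv φ) t)
        - (H2 t * φ t + H1 t * deriv φ t)) = 0 := by
      rw [intervalIntegral.integral_eq_sub_of_hasDerivAt
        (f := fun t => G t * φ t + H t * deriv φ t - H1 t * φ t)]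
      · simp [z0, z0', zL, zL']
      · intro t _
        exact (((hG t).mul (d1 t)).add ((hH t).mul (d2 t))).sub ((hH1 t).mul (d1 t))
      · exact Continuous.intervalIntegrable (by fun_prop) _ _
    have e2 := hv φ hφ hs
    have e3 : ∫ t in (0:ℝ)..L, φ t * (F t - G1 t + H2 t) = 0 := by
      have : ∀ t, φ t * (F t - G1 t + H2 t)
        = (F t * φ t + G t * deriv φ t + H t * deriv (deriv φ) t)
        - (G1 t * φ t + G t * deriv φ t
        + (H1 t * deriv φ t + H t * deriv (deriv φ) t)
        - (H2 t * φ t + H1 t * deriv φ t)) := fun t => by ring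
      simp only [this]
      rw [intervalIntegral.integral_sub, e1, e2, sub_zero]
      all_goals exact Continuous.intervalIntegrable (by fun_prop) _ _
    rw [intervalIntegral.integral_of_le hL.le] at e3
    rw [← e3]
    simp only [smul_eq_mul]
    symm
    apply MeasureTheory.setIntegral_eq_integral_of_forall_compl_eq_zero
    intro x hx
    rw [(hz x fun h => hx ⟨h.1, h.2.le⟩).1, zero_mul]
  have hae2 : (fun t => F t - G1 t + H2 t)
      =ᵐ[MeasureTheory.volume.restrict (Ioo (0:ℝ) L)] (fun _ => (0:ℝ)) :=
    (MeasureTheory.ae_restrict_iff' measurableSet_Ioo).2 hae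
  exact MeasureTheory.Measure.eqOn_open_of_ae_eq hae2 isOpen_Ioo hcont.continuousOn
    continuousOn_const

theorem aux_iter (f : ℝ → ℝ) (hf : ContDiff ℝ (⊤ : ℕ∞) f) (n : ℕ) :
    Continuous (iteratedDeriv n f) ∧
    ∀ t, HasDerivAt (iteratedDeriv n f) (iteratedDeriv (n+1) f t) t := by
  refine ⟨hf.continuous_iteratedDeriv n (by exact_mod_cast le_top), fun t => ?_⟩
  rw [iteratedDeriv_succ]
  exact ((hf.differentiable_iteratedDeriv n (by exact_mod_cast WithTop.coe_lt_top _)) t).hasDerivAt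

set_option maxHeartbeats 2000000 in
/-- If `(u, P)` are smooth and the first variation of the semi-holonomic
energy `Ψ` vanishes for every smooth variation compactly supported in `(0, L)`, then `(u, P)`
satisfies the semi-holonomic Euler–Lagrange equations (S1) and (S2) on `(0, L)`. -/
theorem statement6
    (L a b c d ℓ : ℝ) (hL : 0 < L) (ha : 0 < a) (hb : 0 < b) (hc : 0 < c)
    (hd : 0 < d) (hℓ : 0 < ℓ)
    (nb : Fin 3 → Fin 3 → ℝ)
    (f₀ : ℝ → Fin 3 → ℝ) (f₁ : ℝ → Fin 3 → Fin 3 → ℝ)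
    (hf₀ : ∀ i, Continuous (fun t => f₀ t i))
    (hf₁ : ∀ i j, Continuous (fun t => f₁ t i j))
    (u : ℝ → Fin 3 → ℝ) (P : ℝ → Fin 3 → Fin 3 → ℝ)
    (hu : ∀ i, ContDiff ℝ (⊤ : ℕ∞) (fun t => u t i))
    (hP : ∀ i j, ContDiff ℝ (⊤ : ℕ∞) (fun t => P t i j))
    (hvar : ∀ (δu : ℝ → Fin 3 → ℝ) (δP : ℝ → Fin 3 → Fin 3 → ℝ),
      (∀ i, ContDiff ℝ (⊤ : ℕ∞) (fun t => δu t i)) →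
      (∀ i j, ContDiff ℝ (⊤ : ℕ∞) (fun t => δP t i j)) →
      (∀ i, tsupport (fun t => δu t i) ⊆ Ioo (0:ℝ) L) →
      (∀ i j, tsupport (fun t => δP t i j) ⊆ Ioo (0:ℝ) L) →
      deriv (fun s : ℝ => PsiSemiHolo L a b c d ℓ nb f₀ f₁
        (fun t i => u t i + s * δu t i)
        (fun t i j => P t i j + s * δP t i j)) 0 = 0) :
    ∀ t ∈ Ioo (0:ℝ) L, ∀ i j : Fin 3,
      -- (S1)
      (f₀ t i = -d * (iteratedDeriv 2 (fun s => u s i) t - deriv (fun s => P s i 0) t)) ∧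
      -- (S2)
      (f₁ t i j = a / 2 * (P t i j + P t j i)
        - b * iteratedDeriv 2 (fun s => P s i j) t
        + c * iteratedDeriv 4 (fun s => P s i j) t
        - d * (deriv (fun s => u s i) t - P t i 0) * (if j = 0 then 1 else 0)
        - d * ℓ ^ 4 / 12 * iteratedDeriv 2 (fun s => P s i j) t
            * (if j = 0 then 0 else 1)) := by
  obtain ⟨p, hp⟩ : ∃ p : ℕ → Fin 3 → Fin 3 → ℝ → ℝ,
      ∀ n i j, iteratedDeriv n (fun s => P s i j) = p n i j := ⟨_, fun _ _ _ => rfl⟩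
  obtain ⟨w, hw⟩ : ∃ w : ℕ → Fin 3 → ℝ → ℝ,
      ∀ n i, iteratedDeriv n (fun s => u s i) = w n i := ⟨_, fun _ _ => rfl⟩
  have cu0 : ∀ i, Continuous (fun t => u t i) := fun i => (hu i).continuous
  have cP0 : ∀ i j, Continuous (fun t => P t i j) := fun i j => (hP i j).continuous
  have cu : ∀ n i, Continuous (w n i) :=
    fun n i => hw n i ▸ (aux_iter _ (hu i) n).1
  have cP : ∀ n i j, Continuous (p n i j) :=
    fun n i j => hp n i j ▸ (aux_iter _ (hP i j) n).1
  have du : ∀ n i t, HasDerivAt (w n i)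
    (w (n+1) i t) t := fun n i t => by
    rw [← hw, ← hw]; exact (aux_iter _ (hu i) n).2 t
  have dP : ∀ n i j t, HasDerivAt (p n i j)
    (p (n+1) i j t) t := fun n i j t => by
    rw [← hp, ← hp]; exact (aux_iter _ (hP i j) n).2 t
  have dP0 : ∀ i j t, HasDerivAt (fun s => P s i j)
    (p 1 i j t) t := fun i j t => by
      simpa [← hp] using dP 0 i j t
  have du0 : ∀ i t, HasDerivAt (fun s => u s i)
    (w 1 i t) t := fun i t => by
      simpa [← hw] using du 0 i t
  have main : ∀ (v : Fin 3 → ℝ) (M : Fin 3 → Fin 3 → ℝ), ∀ t ∈ Ioo (0:ℝ) L,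
      (a / 4 * ∑ i : Fin 3, ∑ j : Fin 3, (P t i j + P t j i) * (M i j + M j i)
        - d * ∑ i : Fin 3, (w 1 i t - P t i 0) * M i 0
        - ∑ i : Fin 3, f₀ t i * v i
        - ∑ i : Fin 3, ∑ j : Fin 3, f₁ t i j * M i j)
      - (b * ∑ i : Fin 3, ∑ j : Fin 3, p 2 i j t * M i j
        + d * ℓ ^ 4 / 12 * ∑ i : Fin 3, ∑ α ∈ greek,
            p 2 i α t * M i α
        + d * ∑ i : Fin 3, (w 2 i t
            - p 1 i 0 t) * v i)
      + c * ∑ i : Fin 3, ∑ j : Fin 3, p 4 i j t * M i j = 0 := by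
    intro v M
    refine aux_key L hL
      (fun t => a / 4 * ∑ i : Fin 3, ∑ j : Fin 3, (P t i j + P t j i) * (M i j + M j i)
        - d * ∑ i : Fin 3, (w 1 i t - P t i 0) * M i 0
        - ∑ i : Fin 3, f₀ t i * v i
        - ∑ i : Fin 3, ∑ j : Fin 3, f₁ t i j * M i j)
      (fun t => b * ∑ i : Fin 3, ∑ j : Fin 3, p 1 i j t * M i j
        + d * ℓ ^ 4 / 12 * ∑ i : Fin 3, ∑ α ∈ greek,
            (p 1 i α t - nb i α) * M i α
        + d * ∑ i : Fin 3, (w 1 i t - P t i 0) * v i)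
      (fun t => b * ∑ i : Fin 3, ∑ j : Fin 3, p 2 i j t * M i j
        + d * ℓ ^ 4 / 12 * ∑ i : Fin 3, ∑ α ∈ greek,
            p 2 i α t * M i α
        + d * ∑ i : Fin 3, (w 2 i t
            - p 1 i 0 t) * v i)
      (fun t => c * ∑ i : Fin 3, ∑ j : Fin 3, p 2 i j t * M i j)
      (fun t => c * ∑ i : Fin 3, ∑ j : Fin 3, p 3 i j t * M i j)
      (fun t => c * ∑ i : Fin 3, ∑ j : Fin 3, p 4 i j t * M i j)
      (by fun_prop) (by fun_prop) (by fun_prop) ?_ ?_ ?_ ?_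
    · intro t
      refine ((HasDerivAt.const_mul _ ?_).add (HasDerivAt.const_mul _ ?_)).add
        (HasDerivAt.const_mul _ ?_)
      · exact HasDerivAt.fun_sum fun i _ => HasDerivAt.fun_sum fun j _ => (dP 1 i j t).mul_const _
      · exact HasDerivAt.fun_sum fun i _ => HasDerivAt.fun_sum fun j _ =>
          ((dP 1 i j t).sub_const _).mul_const _
      · exact HasDerivAt.fun_sum fun i _ => ((du 1 i t).sub (dP0 i 0 t)).mul_const _
    · intro t
      exact HasDerivAt.const_mul _ (HasDerivAt.fun_sum fun i _ => HasDerivAt.fun_sum fun j _ =>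
        (dP 2 i j t).mul_const _)
    · intro t
      exact HasDerivAt.const_mul _ (HasDerivAt.fun_sum fun i _ => HasDerivAt.fun_sum fun j _ =>
        (dP 3 i j t).mul_const _)
    · intro φ hφ hs
      have hss : ∀ m : ℝ, tsupport (fun t => m * φ t) ⊆ Ioo (0:ℝ) L := fun m =>
        (closure_mono (show Function.support (fun t => m * φ t) ⊆ Function.support φ from
          fun x hx h0 => hx (by simp [h0]))).trans hs
      have h := hvar (fun t i => v i * φ t) (fun t i j => M i j * φ t)
        (fun i => contDiff_const.mul hφ) (fun i j => contDiff_const.mul hφ)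
        (fun i => hss _) (fun i j => hss _)
      obtain ⟨q, hq⟩ : ∃ q : ℕ → ℝ → ℝ, ∀ n, iteratedDeriv n φ = q n := ⟨_, fun _ => rfl⟩
      have dφ0 : ∀ t, HasDerivAt φ (q 1 t) t := fun t => by
        simpa [← hq] using (aux_iter φ hφ 0).2 t
      have dφ1 : ∀ t, HasDerivAt (q 1) (q 2 t) t := hq 1 ▸ hq 2 ▸ (aux_iter φ hφ 1).2
      have cφ0 := hφ.continuous
      have cφ1 : Continuous (q 1) := hq 1 ▸ (aux_iter φ hφ 1).1
      have cφ2 : Continuous (q 2) := hq 2 ▸ (aux_iter φ hφ 2).1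
      have eP : ∀ s i j, deriv (fun t => P t i j + s * (M i j * φ t))
          = fun t => p 1 i j t
            + s * (M i j * q 1 t) := fun s i j => funext fun t =>
        ((dP0 i j t).add (((dφ0 t).const_mul _).const_mul _)).deriv
      have eu : ∀ s i, deriv (fun t => u t i + s * (v i * φ t))
          = fun t => w 1 i t
            + s * (v i * q 1 t) := fun s i => funext fun t =>
        ((du0 i t).add (((dφ0 t).const_mul _).const_mul _)).deriv
      have eP2 : ∀ s i j, iteratedDeriv 2 (fun t => P t i j + s * (M i j * φ t))
          = fun t => p 2 i j t
            + s * (M i j * q 2 t) := fun s i j => funext fun t => by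
        rw [iteratedDeriv_succ, iteratedDeriv_one, eP]
        exact ((dP 1 i j t).add (((dφ1 t).const_mul _).const_mul _)).deriv
      unfold PsiSemiHolo at h
      simp only [eP, eu, eP2] at h
      have e1 : deriv φ = q 1 := iteratedDeriv_one.symm.trans (hq 1)
      have e2 : deriv (q 1) = q 2 := funext fun t => (dφ1 t).deriv
      rw [e1, e2]
      refine Eq.trans ?_ h
      refine Eq.trans ?_ (Eq.trans (aux_quad L
        (fun t => a / 8 * ∑ i : Fin 3, ∑ j : Fin 3, (P t i j + P t j i) ^ 2
          + b / 2 * ∑ i : Fin 3, ∑ j : Fin 3, (p 1 i j t) ^ 2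
          + d * ℓ ^ 4 / 24 * ∑ i : Fin 3, ∑ α ∈ greek, (p 1 i α t) ^ 2
          + c / 2 * ∑ i : Fin 3, ∑ j : Fin 3, (p 2 i j t) ^ 2
          + d / 2 * ∑ i : Fin 3, (w 1 i t - P t i 0) ^ 2
          - d * ℓ ^ 4 / 12 * ∑ i : Fin 3, ∑ α ∈ greek,
              nb i α * p 1 i α t
          - ∑ i : Fin 3, f₀ t i * u t i
          - ∑ i : Fin 3, ∑ j : Fin 3, f₁ t i j * P t i j)
        (fun t => (a / 4 * ∑ i : Fin 3, ∑ j : Fin 3, (P t i j + P t j i) * (M i j + M j i)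
          - d * ∑ i : Fin 3, (w 1 i t - P t i 0) * M i 0
          - ∑ i : Fin 3, f₀ t i * v i
          - ∑ i : Fin 3, ∑ j : Fin 3, f₁ t i j * M i j) * φ t
          + (b * ∑ i : Fin 3, ∑ j : Fin 3, p 1 i j t * M i j
          + d * ℓ ^ 4 / 12 * ∑ i : Fin 3, ∑ α ∈ greek,
              (p 1 i α t - nb i α) * M i α
          + d * ∑ i : Fin 3, (w 1 i t - P t i 0) * v i)
            * q 1 t
          + (c * ∑ i : Fin 3, ∑ j : Fin 3, p 2 i j t * M i j)
            * q 2 t)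
        (fun t => a / 8 * ∑ i : Fin 3, ∑ j : Fin 3, (M i j * φ t + M j i * φ t) ^ 2
          + b / 2 * ∑ i : Fin 3, ∑ j : Fin 3, (M i j * q 1 t) ^ 2
          + d * ℓ ^ 4 / 24 * ∑ i : Fin 3, ∑ α ∈ greek, (M i α * q 1 t) ^ 2
          + c / 2 * ∑ i : Fin 3, ∑ j : Fin 3, (M i j * q 2 t) ^ 2
          + d / 2 * ∑ i : Fin 3, (v i * q 1 t - M i 0 * φ t) ^ 2)
        (by fun_prop) (by fun_prop) (by fun_prop)).symm ?_)
      · rfl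
      · congr 1
        funext s
        congr 1
        funext t
        have g : ∀ f : Fin 3 → ℝ, ∑ α ∈ greek, f α = f 1 + f 2 := fun f => by
          simp [greek]
        simp only [g, Fin.sum_univ_three]
        ring
  have g : ∀ f : Fin 3 → ℝ, ∑ α ∈ greek, f α = f 1 + f 2 := fun f => by
    simp [greek]
  intro t ht i j
  simp only [← hp, ← hw] at main
  constructor
  · have h := main (Pi.single i 1) 0 t ht
    simp only [Pi.single_apply, mul_ite, mul_one, mul_zero, Finset.sum_ite_eq', Finset.mem_univ,
      if_true, Pi.zero_apply, add_zero, Finset.sum_const_zero, iteratedDeriv_one] at h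
    linarith
  · have h := main 0 (fun k l => if k = i ∧ l = j then 1 else 0) t ht
    simp only [g, Fin.sum_univ_three, iteratedDeriv_one] at h
    fin_cases i <;> fin_cases j <;> simp at h ⊢ <;> linarith
end

section
/- With the above definitions, the three-dimensional internal energy of the ansatz fields equals the homogenised one-dimensional energy: ∫_B [ (a/4)Σ_{i,j}(P^i_j+P^j_i)² + bΣ_{i,j,k}(N^i_{jk})² + cΣ_{i,j,k}(∂₁N^i_{jk})² + dΣ_i(∂₁u^i − P^i_1)² + eΣ_{i,j}(∂₁P^i_j − N^i_{j1})² ] dX = ∫₀ᴸ { |F|·[ (a/4)Σ_{i,j}(P̄^i_j+P̄^j_i)² + bΣ_{i,j,k}(N̄^i_{jk})² + cΣ_{i,j,k}((N̄^i_{jk})′)² + dΣ_i((ū^i)′ − P̄^i_1)² + eΣ_{i,j}((P̄^i_j)′ − N̄^i_{j1})² ] + (a/4)Σ_{i,j}(N̄^i_{jα}+N̄^j_{iα})(N̄^i_{jβ}+N̄^j_{iβ}) I^{αβ} + d Σ_i((P̄^i_α)′ − N̄^i_{1α})((P̄^i_β)′ − N̄^i_{1β}) I^{αβ} + e Σ_{i,j}(N̄^i_{jα})′(N̄^i_{jβ})′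 I^{αβ} } dX¹, where repeated Greek indices α, β ∈ {2,3} are summed. -/
open Filter Set MeasureTheory

/-- The transversal coordinate `X^α` of a point of the fibre `F ⊂ ℝ²` (only used for
`α ∈ greek`): `Xc 1` is `X²` and `Xc 2` is `X³`. -/
def Xc (α : Fin 3) (y : ℝ × ℝ) : ℝ := if α = 1 then y.1 else y.2

/-- The partial derivative `∂₁` in the longitudinal coordinate `X¹` of a scalar field on
`ℝ³ = ℝ × ℝ × ℝ`. -/
noncomputable def d1 (f : ℝ × ℝ × ℝ → ℝ) (x : ℝ × ℝ × ℝ) : ℝ :=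
  deriv (fun s => f (s, x.2)) x.1

/-- `f` is integrable on `F` with integral `v`. -/
def HasI (F : Set (ℝ × ℝ)) (f : ℝ × ℝ → ℝ) (v : ℝ) : Prop :=
  IntegrableOn f F ∧ ∫ y in F, f y = v

theorem HasI.add {F : Set (ℝ × ℝ)} {f g : ℝ × ℝ → ℝ} {v w : ℝ} (hf : HasI F f v)
    (hg : HasI F g w) : HasI F (fun y => f y + g y) (v + w) :=
  ⟨hf.1.add hg.1, by rw [integral_add hf.1 hg.1, hf.2, hg.2]⟩

theorem HasI.cmul {F : Set (ℝ × ℝ)} {f : ℝ × ℝ → ℝ} {v : ℝ} (r : ℝ) (hf : HasI F f v) :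
    HasI F (fun y => r * f y) (r * v) :=
  ⟨hf.1.const_mul r, by rw [integral_const_mul, hf.2]⟩

theorem HasI.sum {ι : Type} {s : Finset ι} {F : Set (ℝ × ℝ)} {f : ι → ℝ × ℝ → ℝ} {v : ι → ℝ}
    (hf : ∀ i ∈ s, HasI F (f i) (v i)) : HasI F (fun y => ∑ i ∈ s, f i y) (∑ i ∈ s, v i) :=
  ⟨integrable_finsetSum s fun i hi => (hf i hi).1, by
    rw [integral_finsetSum s fun i hi => (hf i hi).1]
    exact Finset.sum_congr rfl fun i hi => (hf i hi).2⟩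

theorem cont_Xc (α : Fin 3) : Continuous (Xc α) := by
  unfold Xc; split_ifs <;> fun_prop

theorem intOn_of_cont {X : Type} [PseudoMetricSpace X] [ProperSpace X] [MeasurableSpace X]
    [OpensMeasurableSpace X] {μ : Measure X} [IsFiniteMeasureOnCompacts μ] {F : Set X}
    (hF : Bornology.IsBounded F) {f : X → ℝ} (hf : Continuous f) : IntegrableOn f F μ :=
  (hf.continuousOn.integrableOn_compact' hF.isCompact_closure isClosed_closure.measurableSet).mono_set
    subset_closure

theorem HasI.sq {F : Set (ℝ × ℝ)} (hFb : Bornology.IsBounded F)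
    (hctr : ∀ α ∈ greek, (∫ y in F, Xc α y) = 0) (A : ℝ) (B : Fin 3 → ℝ) :
    HasI F (fun y => (A + ∑ α ∈ greek, B α * Xc α y) ^ 2)
      ((volume F).toReal * A ^ 2 +
        ∑ α ∈ greek, ∑ β ∈ greek, B α * B β * (∫ y in F, Xc α y * Xc β y)) := by
  have hX := cont_Xc
  have h1 : HasI F (fun _ => A ^ 2) ((volume F).toReal * A ^ 2) :=
    ⟨intOn_of_cont hFb (by fun_prop), by simp [Measure.real]⟩
  have h2 : HasI F (fun y => 2 * A * ∑ α ∈ greek, B α * Xc α y)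
      (2 * A * ∑ α ∈ greek, B α * 0) :=
    HasI.cmul _ (HasI.sum fun α hα => HasI.cmul _ ⟨intOn_of_cont hFb (hX α), hctr α hα⟩)
  have h3 : HasI F (fun y => ∑ α ∈ greek, ∑ β ∈ greek, B α * B β * (Xc α y * Xc β y))
      (∑ α ∈ greek, ∑ β ∈ greek, B α * B β * (∫ y in F, Xc α y * Xc β y)) :=
    HasI.sum fun α _ => HasI.sum fun β _ => HasI.cmul _
      ⟨intOn_of_cont hFb ((hX α).mul (hX β)), rfl⟩
  convert (h1.add h2).add h3 using 1
  · funext y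
    simp [greek]
    ring
  · simp

theorem HasI.const {F : Set (ℝ × ℝ)} (hFb : Bornology.IsBounded F) (A : ℝ) :
    HasI F (fun _ => A) ((volume F).toReal * A) :=
  ⟨intOn_of_cont hFb (by fun_prop), by simp [Measure.real]⟩

/-- For the ansatz fields
`u^i(X) = ū^i(X¹) + P̄^i_α(X¹)X^α`, `P^i_j(X) = P̄^i_j(X¹) + N̄^i_{jα}(X¹)X^α`,
`N^i_{jk}(X) = N̄^i_{jk}(X¹)` on `B = [0,L] × F`, with `F` bounded, measurable and centred,
the three-dimensional internal energy equals the homogenised one-dimensional energy. -/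
theorem statement8
    (L a b c d e : ℝ) (hL : 0 < L) (ha : 0 < a) (hb : 0 < b) (hc : 0 < c)
    (hd : 0 < d) (he : 0 < e)
    (F : Set (ℝ × ℝ)) (hFm : MeasurableSet F) (hFb : Bornology.IsBounded F)
    -- the centroid condition ∫_F X^α = 0
    (hctr : ∀ α ∈ greek, (∫ y in F, Xc α y) = 0)
    (ub : ℝ → Fin 3 → ℝ) (Pb : ℝ → Fin 3 → Fin 3 → ℝ) (Nb : ℝ → Fin 3 → Fin 3 → Fin 3 → ℝ)
    (hub : ∀ i, ContDiff ℝ 1 (fun t => ub t i))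
    (hPb : ∀ i j, ContDiff ℝ 1 (fun t => Pb t i j))
    (hNb : ∀ i j k, ContDiff ℝ 1 (fun t => Nb t i j k))
    -- the ansatz fields on B
    (u : ℝ × ℝ × ℝ → Fin 3 → ℝ) (P : ℝ × ℝ × ℝ → Fin 3 → Fin 3 → ℝ)
    (N : ℝ × ℝ × ℝ → Fin 3 → Fin 3 → Fin 3 → ℝ)
    (hu : ∀ x i, u x i = ub x.1 i + ∑ α ∈ greek, Pb x.1 i α * Xc α x.2)
    (hP : ∀ x i j, P x i j = Pb x.1 i j + ∑ α ∈ greek, Nb x.1 i j α * Xc α x.2)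
    (hN : ∀ x i j k, N x i j k = Nb x.1 i j k) :
    (∫ x in (Icc (0:ℝ) L) ×ˢ F,
      (a / 4 * ∑ i : Fin 3, ∑ j : Fin 3, (P x i j + P x j i) ^ 2
        + b * ∑ i : Fin 3, ∑ j : Fin 3, ∑ k : Fin 3, (N x i j k) ^ 2
        + c * ∑ i : Fin 3, ∑ j : Fin 3, ∑ k : Fin 3, (d1 (fun y => N y i j k) x) ^ 2
        + d * ∑ i : Fin 3, (d1 (fun y => u y i) x - P x i 0) ^ 2
        + e * ∑ i : Fin 3, ∑ j : Fin 3, (d1 (fun y => P y i j) x - N x i j 0) ^ 2))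
    =
    ∫ t in Icc (0:ℝ) L,
      ((volume F).toReal *
        (a / 4 * ∑ i : Fin 3, ∑ j : Fin 3, (Pb t i j + Pb t j i) ^ 2
          + b * ∑ i : Fin 3, ∑ j : Fin 3, ∑ k : Fin 3, (Nb t i j k) ^ 2
          + c * ∑ i : Fin 3, ∑ j : Fin 3, ∑ k : Fin 3, (deriv (fun s => Nb s i j k) t) ^ 2
          + d * ∑ i : Fin 3, (deriv (fun s => ub s i) t - Pb t i 0) ^ 2
          + e * ∑ i : Fin 3, ∑ j : Fin 3,
              (deriv (fun s => Pb s i j) t - Nb t i j 0) ^ 2)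
        + a / 4 * ∑ i : Fin 3, ∑ j : Fin 3, ∑ α ∈ greek, ∑ β ∈ greek,
            (Nb t i j α + Nb t j i α) * (Nb t i j β + Nb t j i β)
              * (∫ y in F, Xc α y * Xc β y)
        + d * ∑ i : Fin 3, ∑ α ∈ greek, ∑ β ∈ greek,
            (deriv (fun s => Pb s i α) t - Nb t i 0 α)
              * (deriv (fun s => Pb s i β) t - Nb t i 0 β)
              * (∫ y in F, Xc α y * Xc β y)
        + e * ∑ i : Fin 3, ∑ j : Fin 3, ∑ α ∈ greek, ∑ β ∈ greek,
            deriv (fun s => Nb s i j α) t * deriv (fun s => Nb s i j β) t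
              * (∫ y in F, Xc α y * Xc β y)) := by
  have dN : ∀ i j k, Differentiable ℝ (fun t => Nb t i j k) :=
    fun i j k => (hNb i j k).differentiable (by simp)
  have dP : ∀ i j, Differentiable ℝ (fun t => Pb t i j) :=
    fun i j => (hPb i j).differentiable (by simp)
  have du : ∀ i, Differentiable ℝ (fun t => ub t i) :=
    fun i => (hub i).differentiable (by simp)
  have cN : ∀ i j k, Continuous (fun t => Nb t i j k) := fun i j k => (dN i j k).continuous
  have cP : ∀ i j, Continuous (fun t => Pb t i j) := fun i j => (dP i j).continuous
  have cN' : ∀ i j k, Continuous (deriv fun t => Nb t i j k) :=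
    fun i j k => (hNb i j k).continuous_deriv le_rfl
  have cP' : ∀ i j, Continuous (deriv fun t => Pb t i j) :=
    fun i j => (hPb i j).continuous_deriv le_rfl
  have cu' : ∀ i, Continuous (deriv fun t => ub t i) :=
    fun i => (hub i).continuous_deriv le_rfl
  have eN : ∀ i j k x, d1 (fun y => N y i j k) x = deriv (fun s => Nb s i j k) x.1 := by
    intro i j k x
    simp only [d1, hN]
  have eu : ∀ i x, d1 (fun y => u y i) x = deriv (fun s => ub s i) x.1
      + ∑ α ∈ greek, deriv (fun s => Pb s i α) x.1 * Xc α x.2 := by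
    intro i x
    simp only [d1, hu]
    exact ((du i x.1).hasDerivAt.add
      (HasDerivAt.fun_sum fun α _ => (dP i α x.1).hasDerivAt.mul_const _)).deriv
  have eP : ∀ i j x, d1 (fun y => P y i j) x = deriv (fun s => Pb s i j) x.1
      + ∑ α ∈ greek, deriv (fun s => Nb s i j α) x.1 * Xc α x.2 := by
    intro i j x
    simp only [d1, hP]
    exact ((dP i j x.1).hasDerivAt.add
      (HasDerivAt.fun_sum fun α _ => (dN i j α x.1).hasDerivAt.mul_const _)).deriv
  simp only [eN, eu, eP]
  simp only [hN, hP]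
  have hX := cont_Xc
  rw [Measure.volume_eq_prod, setIntegral_prod]
  · refine setIntegral_congr_fun measurableSet_Icc fun t _ => ?_
    have K := fun (A : ℝ) (B : Fin 3 → ℝ) => HasI.sq hFb hctr A B
    have T1 := HasI.cmul (a / 4) (HasI.sum (s := Finset.univ) fun i _ =>
      HasI.sum (s := Finset.univ) fun j _ =>
        K (Pb t i j + Pb t j i) (fun α => Nb t i j α + Nb t j i α))
    have T2 := HasI.const hFb (b * ∑ i : Fin 3, ∑ j : Fin 3, ∑ k : Fin 3, (Nb t i j k) ^ 2)
    have T3 := HasI.const hFb (c * ∑ i : Fin 3, ∑ j : Fin 3, ∑ k : Fin 3,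
      (deriv (fun s => Nb s i j k) t) ^ 2)
    have T4 := HasI.cmul d (HasI.sum (s := Finset.univ) fun i _ =>
        K (deriv (fun s => ub s i) t - Pb t i 0)
          (fun α => deriv (fun s => Pb s i α) t - Nb t i 0 α))
    have T5 := HasI.cmul e (HasI.sum (s := Finset.univ) fun i _ =>
      HasI.sum (s := Finset.univ) fun j _ =>
        K (deriv (fun s => Pb s i j) t - Nb t i j 0) (fun α => deriv (fun s => Nb s i j α) t))
    have T := ((((T1.add T2).add T3).add T4).add T5).2
    refine Eq.trans ?_ (T.trans ?_)
    · congr 1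
      funext y
      congr 1
      · congr 1
        · congr 2
          congr 1
          refine Finset.sum_congr rfl fun i _ => Finset.sum_congr rfl fun j _ => ?_
          congr 1
          simp only [add_mul, Finset.sum_add_distrib]
          ring
        · congr 1
          refine Finset.sum_congr rfl fun i _ => ?_
          congr 1
          simp only [sub_mul, Finset.sum_sub_distrib]
          ring
      · congr 1
        refine Finset.sum_congr rfl fun i _ => Finset.sum_congr rfl fun j _ => ?_
        congr 1
        ring
    · simp only [Finset.sum_add_distrib, ← Finset.mul_sum]
      ring
  · rw [← Measure.volume_eq_prod]
    exact intOn_of_cont ((Metric.isBounded_Icc 0 L).prod hFb) (by fun_prop)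
end

section
/- Let u : [0,L] → ℝ³ be continuously differentiable, P : [0,L] → ℝ^{3×3} twice continuously differentiable, and let N : [0,L] → ℝ^{3×3×3} satisfy the semi-holonomic constraint N^i_{j1}(X¹) = (P^i_j)′(X¹) for all i, j and N^i_{jα}(X¹) = n̄^i_{jα} for constants n̄^i_{jα} (α ∈ {2,3}). Then, with I^{αβ} = (ℓ⁴/12)δ^{αβ}, the homogenised non-holonomic internal energy ∫₀ᴸ [ (a/4)Σ_{i,j}(P^i_j+P^j_i)² + (a ℓ⁴/48)Σ_{i,j,α}(N^i_{jα}+N^j_{iα})² + bΣ_{i,j,k}(N^i_{jk})² + cΣ_{i,j,k}((N^i_{jk})′)² + dΣ_i((u^i)′−P^i_1)² + (d ℓ⁴/12)Σ_{i,α}((P^i_α)′−N^i_{1α})² + eΣ_{i,j}((P^i_j)′−N^i_{j1})² + (e ℓ⁴/12)Σ_{i,j,α}((N^i_{jα})′)² ] dX¹ equals ∫₀ᴸ [ (a/4)Σ_{i,j}(P^i_j+P^j_i)² + bΣ_i((P^i_1)′)² + (b + d ℓ⁴/12)Σ_{i,α}((P^i_α)′)² + cΣ_{i,j}((P^i_j)″)²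 + dΣ_i((u^i)′−P^i_1)² − (d ℓ⁴/6)Σ_{i,α} n̄^i_{1α}(P^i_α)′ ] dX¹ + K, where K = L·[ (a ℓ⁴/48)Σ_{i,j,α}(n̄^i_{jα}+n̄^j_{iα})² + bΣ_{i,j,α}(n̄^i_{jα})² + (d ℓ⁴/12)Σ_{i,α}(n̄^i_{1α})² ] is a constant depending only on a, b, d, ℓ, L and the constants n̄^i_{jα}. -/
open Filter Set intervalIntegral

/-- Under the semi-holonomic constraint `N^i_{j1} = (P^i_j)′`,
`N^i_{jα} = n̄^i_{jα}` (constants), the homogenised non-holonomic internal energy reduces to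
the semi-holonomic internal energy plus the explicit constant `K`. -/
theorem statement11
    (L a b c d e ℓ : ℝ) (hL : 0 < L) (ha : 0 < a) (hb : 0 < b) (hc : 0 < c)
    (hd : 0 < d) (he : 0 < e) (hℓ : 0 < ℓ)
    (u : ℝ → Fin 3 → ℝ) (P : ℝ → Fin 3 → Fin 3 → ℝ) (N : ℝ → Fin 3 → Fin 3 → Fin 3 → ℝ)
    (nb : Fin 3 → Fin 3 → Fin 3 → ℝ)
    (hu : ∀ i, ContDiff ℝ 1 (fun t => u t i))
    (hP : ∀ i j, ContDiff ℝ 2 (fun t => P t i j))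
    -- the semi-holonomic constraint
    (hN1 : ∀ t : ℝ, ∀ i j : Fin 3, N t i j 0 = deriv (fun s => P s i j) t)
    (hNα : ∀ t : ℝ, ∀ i j : Fin 3, ∀ α ∈ greek, N t i j α = nb i j α) :
    (∫ t in (0:ℝ)..L,
      (a / 4 * ∑ i : Fin 3, ∑ j : Fin 3, (P t i j + P t j i) ^ 2
        + a * ℓ ^ 4 / 48 * ∑ i : Fin 3, ∑ j : Fin 3, ∑ α ∈ greek,
            (N t i j α + N t j i α) ^ 2
        + b * ∑ i : Fin 3, ∑ j : Fin 3, ∑ k : Fin 3, (N t i j k) ^ 2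
        + c * ∑ i : Fin 3, ∑ j : Fin 3, ∑ k : Fin 3, (deriv (fun s => N s i j k) t) ^ 2
        + d * ∑ i : Fin 3, (deriv (fun s => u s i) t - P t i 0) ^ 2
        + d * ℓ ^ 4 / 12 * ∑ i : Fin 3, ∑ α ∈ greek,
            (deriv (fun s => P s i α) t - N t i 0 α) ^ 2
        + e * ∑ i : Fin 3, ∑ j : Fin 3, (deriv (fun s => P s i j) t - N t i j 0) ^ 2
        + e * ℓ ^ 4 / 12 * ∑ i : Fin 3, ∑ j : Fin 3, ∑ α ∈ greek,
            (deriv (fun s => N s i j α) t) ^ 2))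
    =
    (∫ t in (0:ℝ)..L,
      (a / 4 * ∑ i : Fin 3, ∑ j : Fin 3, (P t i j + P t j i) ^ 2
        + b * ∑ i : Fin 3, (deriv (fun s => P s i 0) t) ^ 2
        + (b + d * ℓ ^ 4 / 12) * ∑ i : Fin 3, ∑ α ∈ greek, (deriv (fun s => P s i α) t) ^ 2
        + c * ∑ i : Fin 3, ∑ j : Fin 3, (iteratedDeriv 2 (fun s => P s i j) t) ^ 2
        + d * ∑ i : Fin 3, (deriv (fun s => u s i) t - P t i 0) ^ 2
        - d * ℓ ^ 4 / 6 * ∑ i : Fin 3, ∑ α ∈ greek, nb i 0 α * deriv (fun s => P s i α) t))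
    + L * (a * ℓ ^ 4 / 48 * ∑ i : Fin 3, ∑ j : Fin 3, ∑ α ∈ greek,
            (nb i j α + nb j i α) ^ 2
        + b * ∑ i : Fin 3, ∑ j : Fin 3, ∑ α ∈ greek, (nb i j α) ^ 2
        + d * ℓ ^ 4 / 12 * ∑ i : Fin 3, ∑ α ∈ greek, (nb i 0 α) ^ 2) := by
  have hPc : ∀ i j, Continuous (fun t => P t i j) := fun i j => (hP i j).continuous
  have hP1 : ∀ i j, Continuous (fun t => deriv (fun s => P s i j) t) :=
    fun i j => (hP i j).continuous_deriv (by norm_num)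
  have hP2 : ∀ i j, Continuous (fun t => iteratedDeriv 2 (fun s => P s i j) t) :=
    fun i j => (hP i j).continuous_iteratedDeriv 2 (by norm_num)
  have hu1 : ∀ i, Continuous (fun t => deriv (fun s => u s i) t) :=
    fun i => (hu i).continuous_deriv (by norm_num)
  have hK : ∀ K : ℝ, L * K = ∫ _t in (0:ℝ)..L, K := by
    intro K
    simp
  have hN0' : ∀ i j, (fun s => N s i j 0) = deriv (fun s => P s i j) := by
    intro i j
    funext s
    exact hN1 s i j
  have e1 : ∀ t i j, N t i j 1 = nb i j 1 := fun t i j => hNα t i j 1 (by simp [greek])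
  have e2 : ∀ t i j, N t i j 2 = nb i j 2 := fun t i j => hNα t i j 2 (by simp [greek])
  have hd0 : ∀ t i j, deriv (fun s => N s i j 0) t = iteratedDeriv 2 (fun s => P s i j) t := by
    intro t i j
    rw [hN0', iteratedDeriv_succ, iteratedDeriv_one]
  have hd1 : ∀ t i j, deriv (fun s => N s i j 1) t = 0 := by
    intro t i j
    simp only [e1, deriv_const]
  have hd2 : ∀ t i j, deriv (fun s => N s i j 2) t = 0 := by
    intro t i j
    simp only [e2, deriv_const]
  have hg : ∀ f : Fin 3 → ℝ, ∑ α ∈ greek, f α = f 1 + f 2 := by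
    intro f
    simp [greek]
  rw [hK, ← intervalIntegral.integral_add]
  · congr 1
    funext t
    simp only [hg, Fin.sum_univ_three]
    simp only [hd0, hd1, hd2]
    simp only [e1, e2, hN1]
    ring
  · apply Continuous.intervalIntegrable
    simp only [hg]
    fun_prop
  · exact intervalIntegrable_const
end
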